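/- Let k ≥ 2 be a fixed integer. For every positive integer N, there exists a k-tree G such that impro(G) ≥ N; that is, for every improper interval edge coloring c of G there exist a vertex v and a color l ∈ ℤ with |c^{-1}(l) ∩ E_v| ≥ N. In particular, the interval coloring impropriety of k-trees is unbounded. -/

import Mathlib

/-- A (not necessarily proper) edge coloring `c : Sym2 V → ℤ` of a graph `G` is an
*improper interval edge coloring* if for every vertex `v` the set of colors of the
edges incident with `v` is an interval of integers. -/
def IsImproperIntervalColoring {V : Type*} (G : SimpleGraph V) (c : Sym2 V → ℤ) : Prop :=
  ∀ v : V, ∀ a ∈ c '' G.incidenceSet v, ∀ b ∈ c '' G.incidenceSet v,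
    ∀ x : ℤ, a ≤ x → x ≤ b → x ∈ c '' G.incidenceSet v


/-- The class of `k`-trees, defined recursively: the complete graph `K_{k+1}` is a
`k`-tree, and any graph obtained from a `k`-tree by adding one new vertex joined
exactly to the vertices of some `k`-clique is again a `k`-tree (all up to relabeling
of the vertices). -/
inductive IsKTree (k : ℕ) : (V : Type) → SimpleGraph V → Prop
  /-- The complete graph on `k + 1` vertices is a `k`-tree. -/
  | base (V : Type) (G : SimpleGraph V) (e : V ≃ Fin (k + 1))
      (hadj : ∀ x y : V, G.Adj x y ↔ x ≠ y) : IsKTree k V G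
  /-- Adding to a `k`-tree `G` one new vertex joined exactly to a `k`-clique `s` of `G`
  yields a `k`-tree. -/
  | extend (V : Type) (G : SimpleGraph V) (hG : IsKTree k V G)
      (s : Set V) (hcard : s.ncard = k) (hclique : G.IsClique s)
      (W : Type) (G' : SimpleGraph W) (f : V ⊕ Unit ≃ W)
      (h₁ : ∀ a b : V, G'.Adj (f (Sum.inl a)) (f (Sum.inl b)) ↔ G.Adj a b)
      (h₂ : ∀ a : V, G'.Adj (f (Sum.inl a)) (f (Sum.inr ())) ↔ a ∈ s) :
      IsKTree k W G'

/-- The cone with `r` apexes over the infinite binary heap: the vertices below `r` are apexes,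
adjacent to everything, the vertex `a ≥ r` has children `2 a + 1 - r` and `2 a + 2 - r`. -/
def heapRel (r a b : ℕ) : Prop :=
  a < b ∧ (a < r ∨ b + r = 2 * a + 1 ∨ b + r = 2 * a + 2)

def heapGraph (r m : ℕ) : SimpleGraph (Fin m) where
  Adj x y := heapRel r x y ∨ heapRel r y x
  symm := ⟨fun _ _ h => h.symm⟩
  loopless := ⟨fun x h => by rcases h with h | h <;> exact absurd h.1 (lt_irrefl _)⟩

theorem heapGraph_adj (r m : ℕ) (x y : Fin m) :
    (heapGraph r m).Adj x y ↔ heapRel r x y ∨ heapRel r y x := Iff.rfl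

theorem heap_isKTree (r n : ℕ) : IsKTree (r + 1) (Fin (r + 2 + n)) (heapGraph r (r + 2 + n)) := by
  induction n with
  | zero =>
    refine IsKTree.base _ _ (Equiv.refl _) ?_
    intro x y
    have hx := x.2
    have hy := y.2
    rw [heapGraph_adj, Ne, Fin.ext_iff]
    unfold heapRel
    omega
  | succ n ih =>
    set m := r + 2 + n with hm
    let s : Set (Fin m) := {a | heapRel r a m}
    refine IsKTree.extend _ _ ih s ?_ ?_ (Fin (m + 1)) _
      ((Equiv.optionEquivSumPUnit.{0} (Fin m)).symm.trans finSuccEquivLast.symm) ?_ ?_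
    · have h1 : s = Fin.val ⁻¹' (↑(insert ((m + r - 1) / 2) (Finset.range r)) : Set ℕ) := by
        ext a
        have ha := a.2
        simp only [s, Set.mem_ofPred_eq, Set.mem_preimage, Finset.coe_insert, Set.mem_insert_iff,
          Finset.coe_range, Set.mem_Iio, heapRel]
        omega
      rw [h1, Set.ncard_preimage_of_injective_subset_range Fin.val_injective, Set.ncard_coe_finset,
        Finset.card_insert_of_notMem, Finset.card_range]
      · simp only [Finset.mem_range]; omega
      · intro x hx
        simp only [Finset.coe_insert, Set.mem_insert_iff,
          Finset.coe_range, Set.mem_Iio] at hx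
        exact ⟨⟨x, by omega⟩, rfl⟩
    · intro x hx y hy hxy
      have hx' : heapRel r x m := hx
      have hy' : heapRel r y m := hy
      rw [Ne, Fin.ext_iff] at hxy
      rw [heapGraph_adj]
      unfold heapRel at *
      omega
    · intro a b
      simp [heapGraph_adj]
    · intro a
      have ha := a.2
      simp only [heapGraph_adj, s, heapRel, Set.mem_ofPred_eq]
      simp

theorem heap_degree (r m : ℕ) (v : Fin m) (hv : r ≤ v) :
    ((heapGraph r m).incidenceSet v).ncard ≤ r + 3 := by
  classical
  let T : Finset ℕ := Finset.range r ∪ {(v.1 + r - 1) / 2, 2 * v.1 + 1 - r, 2 * v.1 + 2 - r}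
  have hT : T.card ≤ r + 3 := by
    refine (Finset.card_union_le _ _).trans ?_
    rw [Finset.card_range]
    exact Nat.add_le_add_left Finset.card_le_three _
  have hN : ((heapGraph r m).neighborSet v).ncard ≤ T.card := by
    rw [← Set.ncard_coe_finset]
    refine Set.ncard_le_ncard_of_injOn Fin.val ?_ Fin.val_injective.injOn T.finite_toSet
    intro x hx
    have hx' : heapRel r v x ∨ heapRel r x v := hx
    simp only [T, Finset.coe_union, Set.mem_union, Finset.mem_coe, Finset.mem_range,
      Finset.mem_insert, Finset.mem_singleton]
    unfold heapRel at hx'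
    omega
  refine le_trans ?_ (hN.trans hT)
  have : (heapGraph r m).incidenceSet v ⊆
      (fun w => s(v, w)) '' ((heapGraph r m).neighborSet v) := by
    intro e he
    obtain ⟨h1, h2⟩ := he
    obtain ⟨w, rfl⟩ := h2
    exact ⟨w, h1, rfl⟩
  exact (Set.ncard_le_ncard this (Set.toFinite _)).trans (Set.ncard_image_le (Set.toFinite _))

theorem color_diff {V : Type} [Finite V] (G : SimpleGraph V) (c : Sym2 V → ℤ)
    (hc : IsImproperIntervalColoring G c) (v x y : V) (d : ℕ)
    (hd : (G.incidenceSet v).ncard ≤ d + 1) (hx : G.Adj v x) (hy : G.Adj v y) :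
    c s(v, x) ≤ c s(v, y) + d := by
  have hsub : (↑(Finset.Icc (c s(v, y)) (c s(v, x))) : Set ℤ) ⊆ c '' G.incidenceSet v := by
    intro z hz
    rw [Finset.coe_Icc] at hz
    exact hc v _ ⟨_, ⟨hy, Sym2.mem_mk_left _ _⟩, rfl⟩ _ ⟨_, ⟨hx, Sym2.mem_mk_left _ _⟩, rfl⟩ z
      hz.1 hz.2
  have h1 := Set.ncard_le_ncard hsub (Set.toFinite _)
  have h2 : (c '' G.incidenceSet v).ncard ≤ _ := Set.ncard_image_le (Set.toFinite _)
  rw [Set.ncard_coe_finset, Int.card_Icc] at h1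
  omega

theorem heap_bound (r m : ℕ) (hr : 1 ≤ r) (hm : r < m) (c : Sym2 (Fin m) → ℤ)
    (hc : IsImproperIntervalColoring (heapGraph r m) c) (h : ℕ) :
    ∀ (x : Fin m), r ≤ x → x + 1 < r + 2 ^ (h + 1) →
      |c s(⟨0, by omega⟩, x) - c s(⟨0, by omega⟩, ⟨r, hm⟩)| ≤ 2 * (r + 2) * h := by
  induction h with
  | zero =>
    intro x hx hx'
    have : x = ⟨r, hm⟩ := by
      ext
      simp at hx' ⊢
      omega
    subst this
    simp
  | succ h ih =>
    intro x hx hx'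
    by_cases hxr : x.1 = r
    · have : x = ⟨r, hm⟩ := Fin.ext hxr
      subst this
      simp only [sub_self, abs_zero]
      positivity
    have hxm := x.2
    let p : Fin m := ⟨(x + r - 1) / 2, by omega⟩
    have hp : r ≤ p := by simp only [p]; omega
    have hp' : p.1 + 1 < r + 2 ^ (h + 1) := by
      rw [pow_succ] at hx'
      simp only [p]; omega
    have key := ih p hp hp'
    let u : Fin m := ⟨0, by omega⟩
    have hux : (heapGraph r m).Adj x u := by
      rw [heapGraph_adj]; unfold heapRel; simp only [u]; omega
    have hup : (heapGraph r m).Adj p u := by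
      rw [heapGraph_adj]; unfold heapRel; simp only [u]; omega
    have hxp : (heapGraph r m).Adj x p := by
      rw [heapGraph_adj]; unfold heapRel; simp only [p]; omega
    have dx := heap_degree r m x hx
    have dp := heap_degree r m p hp
    have e1 := color_diff _ c hc x u p (r + 2) dx hux hxp
    have e2 := color_diff _ c hc x p u (r + 2) dx hxp hux
    have e3 := color_diff _ c hc p u x (r + 2) dp hup hxp.symm
    have e4 := color_diff _ c hc p x u (r + 2) dp hxp.symm hup
    rw [Sym2.eq_swap (a := p) (b := x)] at e3 e4
    rw [Sym2.eq_swap (a := p) (b := u)] at e3 e4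
    rw [Sym2.eq_swap (a := x) (b := u)] at e1 e2
    change |c s(u, p) - c s(u, _)| ≤ _ at key
    change |c s(u, x) - c s(u, _)| ≤ _
    rw [abs_le] at key ⊢
    push_cast at *
    constructor <;> nlinarith [key.1, key.2]

theorem exists_height (r N : ℕ) : ∃ h : ℕ, 1 ≤ h ∧
    (4 * (r + 2) * h + 1) * N + 1 ≤ 2 ^ (h + 1) := by
  refine ⟨2 * (8 * (N + 1) * (r + 2)), by nlinarith, ?_⟩
  generalize hq : 8 * (N + 1) * (r + 2) = q
  have h1 : q + 1 ≤ 2 ^ q := Nat.lt_two_pow_self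
  have h2 : (q + 1) * (q + 1) ≤ 2 ^ q * 2 ^ q := Nat.mul_le_mul h1 h1
  have h3 : 2 ^ (2 * q + 1) = 2 * (2 ^ q * 2 ^ q) := by ring
  rw [h3]
  have h4 : 8 * N * (r + 2) ≤ q := by rw [← hq]; gcongr; omega
  have h5 : 8 * N * (r + 2) * q ≤ q * q := Nat.mul_le_mul_right _ h4
  have h6 : N ≤ q := by nlinarith
  nlinarith

/-- For each fixed `k ≥ 2` and every positive integer `N`, there exists a `k`-tree `G`
with impropriety at least `N`: every improper interval edge coloring `c` of `G` has a
vertex `v` and a color `l ∈ ℤ` with `|c⁻¹(l) ∩ E_v| ≥ N`. In particular, the interval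
coloring impropriety of `k`-trees is unbounded. -/
theorem exists_kTree_with_large_impropriety (k : ℕ) (hk : 2 ≤ k) (N : ℕ) (hN : 1 ≤ N) :
    ∃ (V : Type) (G : SimpleGraph V), IsKTree k V G ∧
      ∀ c : Sym2 V → ℤ, IsImproperIntervalColoring G c →
        ∃ (v : V) (l : ℤ), N ≤ {e | e ∈ G.incidenceSet v ∧ c e = l}.ncard := by
  obtain ⟨r, rfl⟩ : ∃ r, k = r + 1 := ⟨k - 1, by omega⟩
  have hr : 1 ≤ r := by omega
  obtain ⟨h, hh, hcard⟩ := exists_height r N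
  have hpow : 4 ≤ 2 ^ (h + 1) := by
    calc 4 = 2 ^ 2 := by norm_num
      _ ≤ 2 ^ (h + 1) := Nat.pow_le_pow_right (by norm_num) (by omega)
  refine ⟨_, _, heap_isKTree r (2 ^ (h + 1) - 3), ?_⟩
  have hmdef : r + 2 + (2 ^ (h + 1) - 3) + 1 = r + 2 ^ (h + 1) := by omega
  generalize r + 2 + (2 ^ (h + 1) - 3) = m at hmdef
  intro c hc
  have hm : r < m := by omega
  have hb := heap_bound r m hr hm c hc h
  let u : Fin m := ⟨0, by omega⟩
  let S : Finset (Fin m) := Finset.Ici ⟨r, hm⟩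
  set C := c s(u, ⟨r, hm⟩) with hC
  let D : ℕ := 2 * (r + 2) * h
  let T : Finset ℤ := Finset.Icc (C - D) (C + D)
  have hmaps : ∀ x ∈ S, c s(u, x) ∈ T := by
    intro x hx
    have hx1 : r ≤ x.1 := by
      have := Finset.mem_Ici.1 hx
      exact this
    have h1 : |c s(u, x) - C| ≤ 2 * (r + 2) * h := hb x hx1 (by have := x.2; omega)
    rw [abs_le] at h1
    simp only [T, Finset.mem_Icc, D]
    push_cast
    constructor <;> linarith [h1.1, h1.2]
  have hT : T.card = 4 * (r + 2) * h + 1 := by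
    have : 4 * (r + 2) * h = 2 * D := by simp only [D]; ring
    rw [this]
    simp only [T, Int.card_Icc]
    omega
  have hS : S.card = m - r := by simp [S]
  obtain ⟨l, -, hl⟩ := Finset.exists_le_card_fiber_of_mul_le_card_of_maps_to (n := N) hmaps
    ⟨C, by simp [T]⟩ (by rw [hT, hS]; omega)
  refine ⟨u, l, hl.trans ?_⟩
  rw [← Set.ncard_coe_finset]
  refine Set.ncard_le_ncard_of_injOn (fun x => s(u, x)) ?_ ?_ (Set.toFinite _)
  · intro x hx
    have hx' := Finset.mem_filter.1 (Finset.mem_coe.1 hx)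
    have hx1 : r ≤ x.1 := by
      have := Finset.mem_Ici.1 hx'.1
      exact this
    refine ⟨⟨?_, Sym2.mem_mk_left _ _⟩, hx'.2⟩
    change (heapGraph r m).Adj u x
    rw [heapGraph_adj]; unfold heapRel; simp only [u]; omega
  · intro x _ y _ hxy
    exact Sym2.congr_right.1 hxy
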